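/- In the setting of Maskit's dividing-loop construction (G a non-degenerate B-group, G₁, G₂ ≤ G, fundamental sets D, D₁, D₂ with D − Δ₀ = (D₁ − Δ₀₁*) + (D₂ − Δ₀₂*)), for every non-invariant component Δ of Ω(G_i) different from Δ₀ᵢ* (i = 1 or 2), the stabilizer of Δ in G coincides with its stabilizer in G_i: G_Δ = G_{i,Δ}. In particular, two points x₁, x₂ ∈ Δ are G-equivalent if and only if they are G_i-equivalent. -/

import Mathlib

open Topology Set

noncomputable section

/-! ### Generalities: groups of homeomorphisms -/

/-- The group of self-homeomorphisms of a topological space, with `(f * g) x = f (g x)`. -/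
instance homeomorphGroup {X : Type*} [TopologicalSpace X] : Group (X ≃ₜ X) where
  mul f g := g.trans f
  one := Homeomorph.refl X
  inv := Homeomorph.symm
  mul_assoc a b c := Homeomorph.ext fun _ => rfl
  one_mul a := Homeomorph.ext fun _ => rfl
  mul_one a := Homeomorph.ext fun _ => rfl
  inv_mul_cancel a := Homeomorph.ext fun x => a.symm_apply_apply x

@[simp] lemma homeomorph_one_apply {X : Type*} [TopologicalSpace X] (x : X) :
    (1 : X ≃ₜ X) x = x := rfl

@[simp] lemma homeomorph_mul_apply {X : Type*} [TopologicalSpace X] (f g : X ≃ₜ X) (x : X) :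
    (f * g) x = f (g x) := rfl

@[simp] lemma homeomorph_inv_apply {X : Type*} [TopologicalSpace X] (f : X ≃ₜ X) (x : X) :
    (f⁻¹ : X ≃ₜ X) x = f.symm x := rfl

/-- The setwise stabilizer of a subset under a subgroup of homeomorphisms. -/
def setStab {X : Type*} [TopologicalSpace X] (G : Subgroup (X ≃ₜ X)) (A : Set X) :
    Subgroup (X ≃ₜ X) where
  carrier := {g | g ∈ G ∧ g '' A = A}
  one_mem' := ⟨G.one_mem, by ext x; simp⟩
  mul_mem' := by
    rintro g h ⟨hg, hgA⟩ ⟨hh, hhA⟩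
    refine ⟨G.mul_mem hg hh, ?_⟩
    have : ⇑(g * h) = ⇑g ∘ ⇑h := rfl
    rw [this, Set.image_comp, hhA, hgA]
  inv_mem' := by
    rintro g ⟨hg, hgA⟩
    refine ⟨G.inv_mem hg, ?_⟩
    conv_lhs => rw [← hgA]
    have : ⇑(g⁻¹ : X ≃ₜ X) = ⇑g.symm := rfl
    rw [this, ← Set.image_comp]
    simp

/-- The orbit of a point under a subgroup of homeomorphisms. -/
def orbitOf {X : Type*} [TopologicalSpace X] (G : Subgroup (X ≃ₜ X)) (x : X) : Set X :=
  {y | ∃ g ∈ G, g x = y}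

/-! ### Lifts along covering maps, Galois coverings artifact, holonomy -/

/-- `L` is a lift of the path `γ : [0,1] → B` through `p : A → B` from `x` to `y`. -/
def LiftsTo {E : Type*} [TopologicalSpace E] (A : Set E) {B : Type*} [TopologicalSpace B]
    (p : C(A, B)) (γ : C(unitInterval, B)) (x y : A) : Prop :=
  ∃ L : C(unitInterval, A), (∀ t, p (L t) = γ t) ∧ L 0 = x ∧ L 1 = y

/-- `p : A → B` is a Galois (regular) covering with deck transformation group (the restriction
of) `G`, a group of homeomorphisms of the ambient space `E` leaving `A` invariant. -/
structure IsGaloisCoveringOn {E : Type*} [TopologicalSpace E] (G : Subgroup (E ≃ₜ E))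
    (A : Set E) {B : Type*} [TopologicalSpace B] (p : C(A, B)) : Prop where
  invariant : ∀ g ∈ G, g '' A = A
  covering : IsCoveringMap p
  deck : ∀ (g : E ≃ₜ E), g ∈ G → ∀ (x : A) (hx : g ↑x ∈ A), p ⟨g ↑x, hx⟩ = p x
  transitive : ∀ x y : A, p x = p y → ∃ g ∈ G, g ↑x = ↑y
  free : ∀ g ∈ G, (∃ x : A, g ↑x = ↑x) → g = 1

/-- `p` is a universal Galois covering: a Galois covering with simply connected total space. -/
structure IsUniversalGaloisCoveringOn {E : Type*} [TopologicalSpace E] (G : Subgroup (E ≃ₜ E))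
    (A : Set E) {B : Type*} [TopologicalSpace B] (p : C(A, B))
    extends IsGaloisCoveringOn G A p : Prop where
  simplyConnected : SimplyConnectedSpace A

/-- The set of deck transformations in `G` arising (via path lifting from the base point `O`)
as the holonomy `h_O (γ)` of loops `γ` based at `p O` whose image is contained in `W`.
This set is the formal rendering of the image `h_O (π₁ (W, p O))` of the natural
homomorphism `h_O` determined by path lifting from `O`. -/
def holSet {E : Type*} [TopologicalSpace E] (G : Subgroup (E ≃ₜ E)) (A : Set E)
    {B : Type*} [TopologicalSpace B] (p : C(A, B)) (O : A) (W : Set B) : Set (E ≃ₜ E) :=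
  {g | g ∈ G ∧ ∃ γ : C(unitInterval, B), γ 0 = p O ∧ γ 1 = p O ∧ (∀ t, γ t ∈ W) ∧
      ∃ y : A, LiftsTo A p γ O y ∧ (↑y : E) = g ↑O}

/-! ### The Riemann sphere and Möbius transformations -/

/-- The Riemann sphere, as the one-point compactification of `ℂ`. -/
abbrev RSphere : Type := OnePoint ℂ

/-- Homeomorphisms of the Riemann sphere. -/
abbrev SphereHomeo : Type := RSphere ≃ₜ RSphere

/-- Standard coordinate: the chart of the sphere at finite points (junk value `0` at `∞`). -/
def sval : RSphere → ℂ := fun z => OnePoint.rec 0 id z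

/-- Inverted coordinate `1/z`: the chart of the sphere at `∞` (junk value at `0`). -/
def svalInv : RSphere → ℂ := fun z => OnePoint.rec 0 (fun w => w⁻¹) z


open scoped Classical in
/-- The standard chart of the Riemann sphere at a point `p`. -/
def schart (p : RSphere) : RSphere → ℂ :=
  if p = (OnePoint.infty : RSphere) then svalInv else sval

/-- `f` is the Möbius transformation with coefficient matrix `(a b; c d)`. -/
def MoebiusCoeffs (a b c d : ℂ) (f : SphereHomeo) : Prop :=
  a * d - b * c ≠ 0 ∧
    ∀ z : ℂ, c * z + d ≠ 0 → f (z : RSphere) = (((a * z + b) / (c * z + d) : ℂ) : RSphere)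

/-- A homeomorphism of the Riemann sphere is a Möbius transformation if it is given by a
fractional linear map. -/
def IsMoebius (f : SphereHomeo) : Prop := ∃ a b c d : ℂ, MoebiusCoeffs a b c d f

/-- A parabolic Möbius transformation: one that is not the identity and has exactly one
fixed point on the sphere. -/
def IsParabolic (f : SphereHomeo) : Prop :=
  IsMoebius f ∧ f ≠ 1 ∧ ∃! z : RSphere, f z = z

/-- Two subgroups of sphere homeomorphisms are conjugate by a Möbius transformation. -/
def MoebiusConjugate (G G' : Subgroup SphereHomeo) : Prop :=
  ∃ M : SphereHomeo, IsMoebius M ∧ G' = Subgroup.map (MulAut.conj M).toMonoidHom G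

/-! ### Kleinian groups -/

/-- The region of discontinuity `Ω(G)`: the set of points possessing a neighbourhood met by
only finitely many of its `G`-translates. -/
def discRegion (G : Subgroup SphereHomeo) : Set RSphere :=
  {z | ∃ U : Set RSphere, IsOpen U ∧ z ∈ U ∧
      {g : SphereHomeo | g ∈ G ∧ ((g '' U) ∩ U).Nonempty}.Finite}

/-- A (finitely generated, torsion free) Kleinian group. -/
structure IsKleinian (G : Subgroup SphereHomeo) : Prop where
  moebius : ∀ g ∈ G, IsMoebius g
  finitelyGenerated : Group.FG G
  torsionFree : ∀ g ∈ G, ∀ n : ℕ, 0 < n → g ^ n = 1 → g = 1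
  discNonempty : (discRegion G).Nonempty

/-- `Δ` is a component (connected component of the discontinuity region) of `G`. -/
def IsComponentOf (G : Subgroup SphereHomeo) (Δ : Set RSphere) : Prop :=
  ∃ z ∈ discRegion G, Δ = connectedComponentIn (discRegion G) z

/-- `Δ` is invariant under `G`. -/
def IsGInvariant (G : Subgroup SphereHomeo) (Δ : Set RSphere) : Prop :=
  ∀ g ∈ G, g '' Δ = Δ

/-- A B-group: a Kleinian group whose discontinuity region contains an invariant component
homeomorphic to a disc; the cyclic group generated by a parabolic transformation
is excluded, so that the invariant component is conformally equivalent to the unit disc. -/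
structure IsBGroup (G : Subgroup SphereHomeo) (Δ₀ : Set RSphere) : Prop where
  kleinian : IsKleinian G
  component : IsComponentOf G Δ₀
  invariant : IsGInvariant G Δ₀
  disc : Nonempty (Δ₀ ≃ₜ (Metric.ball (0:ℂ) 1))
  notParabolicCyclic : ¬ ∃ f : SphereHomeo, IsParabolic f ∧ G = Subgroup.closure {f}

/-- A fundamental set for `G` in its discontinuity region: a set meeting each orbit of
`Ω(G)` exactly once. -/
def IsFundamentalSet (G : Subgroup SphereHomeo) (D : Set RSphere) : Prop :=
  D ⊆ discRegion G ∧ ∀ x ∈ discRegion G, ∃! y, y ∈ D ∧ ∃ g ∈ G, g x = y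

/-! ### Holomorphy on the sphere and on charted surfaces -/

/-- A map from a subset of the Riemann sphere to the Riemann sphere is holomorphic if,
read in the standard charts, it is locally given by an analytic function. -/
def SphHolomorphicOn (A : Set RSphere) (f : A → RSphere) : Prop :=
  Continuous f ∧ ∀ x : A, ∃ g : ℂ → ℂ, AnalyticAt ℂ g (schart ↑x ↑x) ∧
    ∀ᶠ y : A in nhds x, schart (f x) (f y) = g (schart (↑x : RSphere) ↑y)

/-- A map from a subset of the Riemann sphere to a surface with complex charts
is holomorphic if, read in charts, it is locally given by an analytic function. -/
def SphHolomorphicToCharted {B : Type*} [TopologicalSpace B] (cB : ChartedSpace ℂ B)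
    (A : Set RSphere) (f : C(A, B)) : Prop :=
  ∀ x : A, ∃ g : ℂ → ℂ, AnalyticAt ℂ g (schart ↑x ↑x) ∧
    ∀ᶠ y : A in nhds x, (cB.chartAt (f x)) (f y) = g (schart (↑x : RSphere) ↑y)

/-- A map between two spaces endowed with complex charts is holomorphic if, read in the
charts, it is locally given by an analytic function. -/
def HolomorphicBetween {X Y : Type*} [TopologicalSpace X] [TopologicalSpace Y]
    (cX : ChartedSpace ℂ X) (cY : ChartedSpace ℂ Y) (f : X → Y) : Prop :=
  Continuous f ∧ ∀ x : X, ∃ g : ℂ → ℂ, AnalyticAt ℂ g (cX.chartAt x x) ∧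
    ∀ᶠ y in nhds x, (cY.chartAt (f x)) (f y) = g (cX.chartAt x y)

/-- A biholomorphic map (conformal isomorphism) between charted surfaces. -/
def BiholomorphicWith {X Y : Type*} [TopologicalSpace X] [TopologicalSpace Y]
    (cX : ChartedSpace ℂ X) (cY : ChartedSpace ℂ Y) (f : X ≃ₜ Y) : Prop :=
  HolomorphicBetween cX cY f ∧ HolomorphicBetween cY cX f.symm

/-! ### Orientation reversal (via the local degree on small circles) -/

/-- Two free loops in `ℂ` are freely homotopic within the subset `A` of `ℂ`. -/
def FreeLoopHomotopicIn (A : Set ℂ) (f g : Circle → ℂ) : Prop :=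
  ∃ (F G : C(Circle, A)), (∀ u, (↑(F u) : ℂ) = f u) ∧ (∀ u, (↑(G u) : ℂ) = g u) ∧
    F.Homotopic G

/-- The local chart representative of a map between charted surfaces at a point. -/
def chartMap {X Y : Type*} [TopologicalSpace X] [TopologicalSpace Y]
    (cX : ChartedSpace ℂ X) (cY : ChartedSpace ℂ Y) (f : X → Y) (x : X) : ℂ → ℂ :=
  fun z => cY.chartAt (f x) (f ((cX.chartAt x).symm z))

/-- A map between charted surfaces reverses orientation at `x` if, read in charts, the image
of every sufficiently small circle around `x` winds around the image point in the negative
sense, i.e. is freely homotopic in the punctured plane to a small clockwise circle.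
This is the formal rendering of ``the map reverses the orientation induced by the complex
structures''. -/
def ReversesOrientationAt {X Y : Type*} [TopologicalSpace X] [TopologicalSpace Y]
    (cX : ChartedSpace ℂ X) (cY : ChartedSpace ℂ Y) (f : X → Y) (x : X) : Prop :=
  ∀ᶠ (r : ℝ) in nhdsWithin (0:ℝ) (Set.Ioi (0:ℝ)), ∃ s : ℝ, 0 < s ∧
    FreeLoopHomotopicIn {w : ℂ | w ≠ chartMap cX cY f x (cX.chartAt x x)}
      (fun u => chartMap cX cY f x (cX.chartAt x x + (r : ℂ) * (u : ℂ)))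
      (fun u => chartMap cX cY f x (cX.chartAt x x) + (s : ℂ) * (starRingEnd ℂ (u : ℂ)))

/-- A map between charted surfaces reverses orientation. -/
def ReversesOrientation {X Y : Type*} [TopologicalSpace X] [TopologicalSpace Y]
    (cX : ChartedSpace ℂ X) (cY : ChartedSpace ℂ Y) (f : X → Y) : Prop :=
  ∀ x, ReversesOrientationAt cX cY f x

/-- Reversal (orientation reversal) of a free loop. -/
def loopReverse {S : Type*} [TopologicalSpace S] (γ : C(Circle, S)) : C(Circle, S) :=
  γ.comp ⟨fun u => u⁻¹, continuous_inv⟩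

/-- A free loop is peripheral (bounds a punctured disc / surrounds a puncture) if it is
freely homotopic to loops avoiding any given compact set. -/
def IsPeripheral {S : Type*} [TopologicalSpace S] (γ : C(Circle, S)) : Prop :=
  ∀ C : Set S, IsCompact C → ∃ γ' : C(Circle, S), γ.Homotopic γ' ∧ Set.range γ' ∩ C = ∅

/-- A free loop is null-homotopic (bounds a disc). -/
def IsNullHomotopic {S : Type*} [TopologicalSpace S] (γ : C(Circle, S)) : Prop :=
  γ.Homotopic (ContinuousMap.const Circle (γ 1))

/-! ### The marked 2-complex associated with an admissible system of loops -/

/-- All the topological and conformal data of the construction of the (marked) 2-complex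
`K = K(S₀, α₁, …, α_k)` associated with an admissible system of loops `α₁, …, α_k` on a
surface `S₀`:
* a complex structure (atlas of `ℂ`-charts) on `S₀`;
* the admissible (homotopically independent) system of simple loops `α_j`;
* the components `S_l' = Sp l` of the complement of the loops, with tubular neighbourhoods
  `U_j` of the loops and the sets `S_l'' = Sdd l`;
* the complex `K` with its connectors `c_j = conn j`, its components `S_l = comp l`, the
  enlarged punctured discs `C_j¹, C_j²` and canonical identifications `ident l` of `S_l'`
  with subsets of the components of `K`;
* a marking: complex structures on the marked components, for which the canonical
  identifications reverse orientation. -/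
structure PreComplexData (S₀ K : Type*) [TopologicalSpace S₀] [TopologicalSpace K] where
  /-- the complex structure of the Riemann surface `S₀` -/
  csS₀ : ChartedSpace ℂ S₀
  /-- the number of loops -/
  k : ℕ
  /-- the loops `α_j` -/
  αLoop : Fin k → C(Circle, S₀)
  /-- the loops are simple -/
  αSimple : ∀ j, Function.Injective (αLoop j)
  /-- the loops as subsets -/
  αSet : Fin k → Set S₀
  αSetDef : ∀ j, αSet j = Set.range (αLoop j)
  /-- the loops are pairwise disjoint -/
  αDisj : ∀ i j, i ≠ j → Disjoint (αSet i) (αSet j)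
  /-- no loop bounds a disc -/
  αNotNull : ∀ j, ¬ IsNullHomotopic (αLoop j)
  /-- no loop bounds a punctured disc -/
  αNotPeriph : ∀ j, ¬ IsPeripheral (αLoop j)
  /-- distinct loops are not freely homotopic, even after reversal -/
  αDistinct : ∀ i j, i ≠ j →
    ¬ (αLoop i).Homotopic (αLoop j) ∧ ¬ (αLoop i).Homotopic (loopReverse (αLoop j))
  /-- the number of components of the complement of the loops (and of the complex `K`) -/
  m : ℕ
  /-- the components `S_l'` of `S₀ - (α₁ ∪ ⋯ ∪ α_k)` -/
  Sp : Fin m → Set S₀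
  SpComp : ∀ l, ∃ x ∈ Set.univ \ ⋃ j, αSet j,
    Sp l = connectedComponentIn (Set.univ \ ⋃ j, αSet j) x
  SpCover : (⋃ l, Sp l) = Set.univ \ ⋃ j, αSet j
  SpInj : Function.Injective Sp
  /-- tubular neighbourhoods `U_j` of the loops -/
  U : Fin k → Set S₀
  UOpen : ∀ j, IsOpen (U j)
  UMem : ∀ j, αSet j ⊆ U j
  UDisj : ∀ i j, i ≠ j → Disjoint (U i) (U j)
  /-- the connectors `c_j` of the complex `K` -/
  conn : Fin k → Set K
  /-- the components `S_l` of the complex `K` -/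
  comp : Fin m → Set K
  compOpen : ∀ l, IsOpen (comp l)
  compConn : ∀ l, IsConnected (comp l)
  compDisj : ∀ l l', l ≠ l' → Disjoint (comp l) (comp l')
  /-- `K` is the union of its components and its connectors -/
  Kdecomp : (⋃ l, comp l) = Set.univ \ ⋃ j, conn j
  /-- the attached punctured discs, enlarged by the adjacent halves of the tubular
  neighbourhoods -/
  C1 : Fin k → Set K
  C2 : Fin k → Set K
  /-- the sets `S_l'' = S_l' - ⋃ (C_j¹ + C_j²)` -/
  Sdd : Fin m → Set S₀
  SddSub : ∀ l, Sdd l ⊆ Sp l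
  SddDef : ∀ l, Sdd l = Sp l \ ⋃ j, U j
  /-- the canonical identification of `S_l'` with a subset of the component `S_l` of `K` -/
  ident : ∀ l, C(Sp l, K)
  identRange : ∀ l, Set.range (ident l) ⊆ comp l
  identInj : ∀ l, Function.Injective (ident l)
  /-- complex structures on the sets `S_l''` induced from `S₀` -/
  csSdd : ∀ l : Fin m, ChartedSpace ℂ (Sdd l)
  holIncSdd : ∀ l, HolomorphicBetween (csSdd l) csS₀ (Subtype.val : Sdd l → S₀)

/-- A marked 2-complex: the 2-complex data together with a marking, i.e. complex
structures on some of its components for which the canonical identifications reverse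
orientation. -/
structure SurfaceComplexData (S₀ K : Type*) [TopologicalSpace S₀] [TopologicalSpace K]
    extends PreComplexData S₀ K where
  /-- the marked components -/
  marked : Set (Fin m)
  /-- the marking: complex structures on the marked components -/
  cs : ∀ l : Fin m, l ∈ marked → ChartedSpace ℂ (comp l)
  /-- the canonical identifications of marked components reverse orientation -/
  identRev : ∀ (l : Fin m) (hl : l ∈ marked) (F : Sdd l → comp l),
    (∀ x : Sdd l, (↑(F x) : K) = ident l ⟨↑x, SddSub l x.2⟩) →
    ReversesOrientation (csSdd l) (cs l hl) F

/-- A completely non-degenerate marked complex: all components are marked. -/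
def SurfaceComplexData.CompletelyMarked {S₀ K : Type*} [TopologicalSpace S₀]
    [TopologicalSpace K] (X : SurfaceComplexData S₀ K) : Prop :=
  X.marked = Set.univ

/-- A B-group `G` realizing the marked complex data `X`:
* `S₀ = Δ₀ / G`, realized by a holomorphic universal Galois covering `π₀ : Δ₀ → S₀`;
* the loops `α_j` realize (conjugacy classes of) accidental parabolic transformations;
* for each marked component `S_t⁺` of `K`, the part `Ω_t = π⁻¹(S_t⁺)` of the discontinuity
  region, realized by a holomorphic Galois covering `π_t : Ω_t → S_t⁺`;
* `Ω(G) = Δ₀ ∪ ⋃ Ω_t`, i.e. `Ω(G)/G = S₀ + Σ S_t⁺`. -/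
structure BGroupCore {S₀ K : Type*} [TopologicalSpace S₀] [TopologicalSpace K]
    (X : PreComplexData S₀ K) where
  /-- the group -/
  G : Subgroup SphereHomeo
  /-- the invariant component -/
  Δ₀ : Set RSphere
  isB : IsBGroup G Δ₀
  /-- the projection `π₀ : Δ₀ → S₀ = Δ₀/G` -/
  π₀ : C(Δ₀, S₀)
  cover₀ : IsUniversalGaloisCoveringOn G Δ₀ π₀
  hol₀ : SphHolomorphicToCharted X.csS₀ Δ₀ π₀
  /-- each loop `α_j` is covered by an accidental parabolic transformation of `G` -/
  αAPT : ∀ j : Fin X.k, ∃ g : SphereHomeo, g ∈ G ∧ g ≠ 1 ∧ IsParabolic g ∧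
    ∃ O : Δ₀, g ∈ holSet G Δ₀ π₀ O (X.αSet j)

/-- A B-group realizing the full marked complex data `X`. -/
structure BGroupOnData {S₀ K : Type*} [TopologicalSpace S₀] [TopologicalSpace K]
    (X : SurfaceComplexData S₀ K) extends BGroupCore X.toPreComplexData where
  /-- the parts `Ω_t = π⁻¹(S_t⁺)` of the discontinuity region over the marked components -/
  Ωp : ∀ l : Fin X.m, l ∈ X.marked → Set RSphere
  ΩpSub : ∀ l hl, Ωp l hl ⊆ discRegion G
  ΩpDisj₀ : ∀ l hl, Disjoint (Ωp l hl) Δ₀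
  ΩpDisj : ∀ l hl l' hl', l ≠ l' → Disjoint (Ωp l hl) (Ωp l' hl')
  /-- each `Ω_t` is a union of components of `Ω(G)` -/
  ΩpComp : ∀ l hl, ∀ x ∈ Ωp l hl, connectedComponentIn (discRegion G) x ⊆ Ωp l hl
  /-- the projections `π_t : Ω_t → S_t⁺` -/
  πp : ∀ (l : Fin X.m) (hl : l ∈ X.marked), C(Ωp l hl, X.comp l)
  coverp : ∀ l hl, IsGaloisCoveringOn G (Ωp l hl) (πp l hl)
  holp : ∀ l hl, SphHolomorphicToCharted (X.cs l hl) (Ωp l hl) (πp l hl)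
  /-- the decomposition `Ω(G)/G = S₀ + Σ S_t⁺` -/
  decomp : discRegion G = Δ₀ ∪ ⋃ l, ⋃ hl : l ∈ X.marked, Ωp l hl

/-- A good map `Φ : S₀ → K` (Main Lemma): it maps each `S_l''` into the corresponding
component `S_l` of `K`, maps the tubular neighbourhood `U_j` onto `C_j¹ + C_j² + c_j`,
and reverses orientation from `S_t''` to `S_t⁺` for every marked `t`. -/
def IsGoodMap {S₀ K : Type*} [TopologicalSpace S₀] [TopologicalSpace K]
    (X : SurfaceComplexData S₀ K) (Φ : C(S₀, K)) : Prop :=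
  (∀ l, Φ '' X.Sdd l ⊆ X.comp l) ∧
  (∀ j, Φ '' X.U j = X.C1 j ∪ X.C2 j ∪ X.conn j) ∧
  (∀ (l : Fin X.m) (hl : l ∈ X.marked) (F : X.Sdd l → X.comp l),
    (∀ x : X.Sdd l, (↑(F x) : K) = Φ ↑x) → ReversesOrientation (X.csSdd l) (X.cs l hl) F)

/-- The compatibility of a map `Φ : S₀ → K` with the holonomy (deck transformation)
isomorphisms (property (4) of the map of Lemma `lem0`): for every marked component `S_t⁺`,
every `o ∈ S_t''`, every `O ∈ π₀⁻¹(o)` and `q = Φ(o)`, there is `Q ∈ π_t⁻¹(q)` such that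
`h_O(γ) = h_Q(Φ∗γ)` for every loop `γ` in `S_t''` based at `o`. -/
def FactorCompatible {S₀ K : Type*} [TopologicalSpace S₀] [TopologicalSpace K]
    {X : SurfaceComplexData S₀ K} (D : BGroupOnData X) (Φ : C(S₀, K)) : Prop :=
  ∀ (l : Fin X.m) (hl : l ∈ X.marked) (O : D.Δ₀), D.π₀ O ∈ X.Sdd l →
    ∀ hq : Φ (D.π₀ O) ∈ X.comp l,
      ∃ Q : D.Ωp l hl, D.πp l hl Q = ⟨Φ (D.π₀ O), hq⟩ ∧
        ∀ γ : C(unitInterval, S₀), γ 0 = D.π₀ O → γ 1 = D.π₀ O → (∀ t, γ t ∈ X.Sdd l) →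
          ∀ g : SphereHomeo, g ∈ D.G →
            (∃ y : D.Δ₀, LiftsTo D.Δ₀ D.π₀ γ O y ∧ (↑y : RSphere) = g ↑O) →
            ∃ L' : C(unitInterval, D.Ωp l hl),
              (∀ t, (↑(D.πp l hl (L' t)) : K) = Φ (γ t)) ∧ L' 0 = Q ∧
              (↑(L' 1) : RSphere) = g ↑Q

/-- The factor of a completely non-degenerate B-group: the triple `(S₀, K, [φ])` where `K`
is the marked characteristic complex and `[φ]` is the homotopy class of the good map `Φ`. -/
structure FactorTriple {S₀ K : Type*} [TopologicalSpace S₀] [TopologicalSpace K]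
    (X : SurfaceComplexData S₀ K) (D : BGroupOnData X) where
  /-- a representative of the homotopy class `[φ] : S₀ → K` -/
  Φ : C(S₀, K)
  good : IsGoodMap X Φ
  compat : FactorCompatible D Φ

/-- Conformal equivalence of two factors `(S₀, K, [φ])` and `(S̃₀, K̃, [φ̃])`:
a biholomorphic map `Ψ₀ : S₀ → S̃₀` and a homeomorphism `Ψ : K → K̃` matching the (marked)
components, with `Ψ ∘ [φ] = [φ̃] ∘ Ψ₀` (as homotopy classes) and with `Ψ` biholomorphic on
each marked component. -/
def FactorConformallyEquivalent {S₀ K S₀' K' : Type*} [TopologicalSpace S₀]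
    [TopologicalSpace K] [TopologicalSpace S₀'] [TopologicalSpace K']
    (X : SurfaceComplexData S₀ K) (Φ : C(S₀, K))
    (X' : SurfaceComplexData S₀' K') (Φ' : C(S₀', K')) : Prop :=
  ∃ (Ψ₀ : S₀ ≃ₜ S₀') (Ψ : K ≃ₜ K') (e : Fin X.m ≃ Fin X'.m),
    BiholomorphicWith X.csS₀ X'.csS₀ Ψ₀ ∧
    (∀ l, Ψ '' X.comp l = X'.comp (e l)) ∧
    (∀ l, l ∈ X.marked ↔ e l ∈ X'.marked) ∧
    ContinuousMap.Homotopic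
      (ContinuousMap.comp ⟨⇑Ψ, Ψ.continuous⟩ Φ)
      (Φ'.comp ⟨⇑Ψ₀, Ψ₀.continuous⟩) ∧
    (∀ (l : Fin X.m) (hl : l ∈ X.marked) (hl' : e l ∈ X'.marked)
        (F : X.comp l ≃ₜ X'.comp (e l)),
      (∀ x, (↑(F x) : K') = Ψ ↑x) → BiholomorphicWith (X.cs l hl) (X'.cs (e l) hl') F)

/-- Two Kleinian groups are conformally conjugate on their discontinuity sets: there is a
conformal isomorphism `R : Ω(G) → Ω(G')` such that `g ↦ R ∘ g ∘ R⁻¹` is an isomorphism of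
`G` onto `G'` conjugating the two actions. -/
def ConformallyConjugateOnDisc (G G' : Subgroup SphereHomeo) : Prop :=
  ∃ R : discRegion G ≃ₜ discRegion G',
    SphHolomorphicOn (discRegion G) (fun x => (↑(R x) : RSphere)) ∧
    SphHolomorphicOn (discRegion G') (fun x => (↑(R.symm x) : RSphere)) ∧
    (∀ g ∈ G, ∃ g' ∈ G', ∀ x y : discRegion G,
      g ↑x = (↑y : RSphere) → g' ↑(R x) = (↑(R y) : RSphere)) ∧
    (∀ g' ∈ G', ∃ g ∈ G, ∀ x y : discRegion G,
      g ↑x = (↑y : RSphere) → g' ↑(R x) = (↑(R y) : RSphere))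

/-! ### Hyperbolic 3-space and geometric finiteness -/

/-- The embedding of `ℂ` into the quaternions (spanning the `1, i` plane). -/
def cq (z : ℂ) : Quaternion ℝ := ⟨z.re, z.im, 0, 0⟩

/-- Hyperbolic 3-space: the upper half-space model inside the quaternions, namely the
quaternions `z + t j` with `z ∈ ℂ` and `t > 0`. -/
def H3 : Set (Quaternion ℝ) := {q | q.imK = 0 ∧ 0 < q.imJ}

/-- The Poincaré extension to hyperbolic 3-space of the Möbius transformation with matrix
`(a b; c d)`, via the quaternion formula `w ↦ (a w + b) (c w + d)⁻¹`. -/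
def mobH3 (a b c d : ℂ) (w : Quaternion ℝ) : Quaternion ℝ :=
  (cq a * w + cq b) * (cq c * w + cq d)⁻¹

/-- The standard (closed) hyperbolic half-space, bounded by the geodesic plane over the
imaginary axis. -/
def stdHalfSpace : Set (Quaternion ℝ) := {q | q ∈ H3 ∧ q.re ≤ 0}

/-- A (closed) hyperbolic half-space in `H³`: a Möbius image of the standard one. -/
def IsHyperbolicHalfSpace (A : Set (Quaternion ℝ)) : Prop :=
  ∃ a b c d : ℂ, a * d - b * c ≠ 0 ∧ A = mobH3 a b c d '' stdHalfSpace

/-- The interior of a subset of `H³` relative to `H³`. -/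
def H3interior (P : Set (Quaternion ℝ)) : Set (Quaternion ℝ) :=
  {q | q ∈ H3 ∧ ∃ U : Set (Quaternion ℝ), IsOpen U ∧ q ∈ U ∧ U ∩ H3 ⊆ P}

/-- A group of Möbius transformations is geometrically finite if its natural (Poincaré
extension) action on hyperbolic 3-space has a finite-sided fundamental polyhedron: a
fundamental set which is the intersection with `H³` of finitely many hyperbolic
half-spaces. -/
def GeometricallyFinite (G : Subgroup SphereHomeo) : Prop :=
  ∃ P : Set (Quaternion ℝ), P ⊆ H3 ∧
    (∃ (n : ℕ) (Hs : Fin n → Set (Quaternion ℝ)),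
      (∀ i, IsHyperbolicHalfSpace (Hs i)) ∧ P = H3 ∩ ⋂ i, Hs i) ∧
    (∀ x ∈ H3, ∃ g ∈ G, ∃ a b c d : ℂ, MoebiusCoeffs a b c d g ∧
      x ∈ mobH3 a b c d '' P) ∧
    (∀ g ∈ G, g ≠ 1 → ∀ a b c d : ℂ, MoebiusCoeffs a b c d g →
      (mobH3 a b c d '' H3interior P) ∩ H3interior P = ∅)

/-! ## Statement 14 -/

/-! A point of `Ω(G)` has a finite stabilizer, hence a trivial one when `G` is torsion free, so an
element of `G` is determined by its effect on one point of `Ω(G)`. Let `H ≤ G` have a fundamental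
set `E` whose part outside an `H`-invariant set `A` lies in a fundamental set `D` of `G`. If `x`
and `g x` lie in `Ω(H) \ A`, elements `a` and `b` of `H` move them into `D`; the points `a x` and
`b (g x)` of `D` are `G`-equivalent, so they coincide, and `b g a⁻¹` fixes this point. Hence
`g = b⁻¹ a` belongs to `H`. -/

section Homeomorphisms

variable {X : Type*} [TopologicalSpace X] {G H : Subgroup (X ≃ₜ X)} {A : Set X}

lemma mem_setStab_singleton {g : X ≃ₜ X} {x : X} : g ∈ setStab G {x} ↔ g ∈ G ∧ g x = x := by
  change g ∈ G ∧ g '' {x} = {x} ↔ _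
  rw [image_singleton, singleton_eq_singleton_iff]

lemma setStab_eq_setStab_of_le (hle : H ≤ G) (hA : A.Nonempty)
    (hmem : ∀ g ∈ G, ∀ x ∈ A, g x ∈ A → g ∈ H) : setStab G A = setStab H A := by
  obtain ⟨x, hx⟩ := hA
  ext g
  refine ⟨fun ⟨hg, hgA⟩ => ⟨?_, hgA⟩, fun ⟨hg, hgA⟩ => ⟨hle hg, hgA⟩⟩
  have hgx : g x ∈ A := hgA ▸ mem_image_of_mem g hx
  exact hmem g hg x hx hgx

lemma exists_mem_apply_eq_iff_of_le (hle : H ≤ G)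
    (hmem : ∀ g ∈ G, ∀ x ∈ A, g x ∈ A → g ∈ H) {x y : X} (hx : x ∈ A) (hy : y ∈ A) :
    (∃ g ∈ G, g x = y) ↔ ∃ g ∈ H, g x = y := by
  constructor
  · rintro ⟨g, hg, rfl⟩
    exact ⟨g, hmem g hg x hx hy, rfl⟩
  · rintro ⟨g, hg, hgx⟩
    exact ⟨g, hle hg, hgx⟩

end Homeomorphisms

section DiscontinuityRegion

variable {G H : Subgroup SphereHomeo} {A D E Δ Δ' : Set RSphere} {g : SphereHomeo} {x : RSphere}

lemma finite_setStab_singleton (hx : x ∈ discRegion G) :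
    (setStab G {x} : Set SphereHomeo).Finite := by
  obtain ⟨U, -, hxU, hfinite⟩ := hx
  refine hfinite.subset fun g hg => ?_
  obtain ⟨hgG, hgx⟩ := mem_setStab_singleton.1 hg
  exact ⟨hgG, x, ⟨x, hxU, hgx⟩, hxU⟩

lemma setStab_singleton_eq_bot (htf : ∀ g ∈ G, ∀ n : ℕ, 0 < n → g ^ n = 1 → g = 1)
    (hx : x ∈ discRegion G) : setStab G {x} = ⊥ := by
  refine (Subgroup.eq_bot_iff_forall _).2 fun g hg => ?_
  have hfinOrder : IsOfFinOrder g :=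
    finite_powers.1 ((finite_setStab_singleton hx).subset (Submonoid.powers_le.2 hg))
  obtain ⟨n, hn, hgn⟩ := isOfFinOrder_iff_pow_eq_one.1 hfinOrder
  exact htf g (mem_setStab_singleton.1 hg).1 n hn hgn

lemma IsGInvariant.apply_mem_iff (hA : IsGInvariant G A) (hg : g ∈ G) : g x ∈ A ↔ x ∈ A := by
  nth_rw 1 [← hA g hg]
  exact g.injective.mem_set_image

lemma IsComponentOf.nonempty (hΔ : IsComponentOf G Δ) : Δ.Nonempty := by
  obtain ⟨z, hz, rfl⟩ := hΔ
  exact ⟨z, mem_connectedComponentIn hz⟩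

lemma IsComponentOf.subset_discRegion_sdiff (hΔ : IsComponentOf G Δ) (hΔ' : IsComponentOf G Δ')
    (hne : Δ ≠ Δ') : Δ ⊆ discRegion G \ Δ' := by
  obtain ⟨z, -, rfl⟩ := hΔ
  obtain ⟨z', -, rfl⟩ := hΔ'
  refine subset_sdiff.2 ⟨connectedComponentIn_subset _ _, disjoint_left.2 fun x hx hx' => hne ?_⟩
  rw [connectedComponentIn_eq hx, connectedComponentIn_eq hx']

lemma IsFundamentalSet.apply_eq_self (hD : IsFundamentalSet G D) (hg : g ∈ G) (hx : x ∈ D)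
    (hgx : g x ∈ D) : g x = x :=
  (hD.2 x (hD.1 hx)).unique ⟨hgx, g, hg, rfl⟩ ⟨hx, 1, G.one_mem, rfl⟩

lemma IsFundamentalSet.eq_one_of_apply_mem (hD : IsFundamentalSet G D)
    (htf : ∀ g ∈ G, ∀ n : ℕ, 0 < n → g ^ n = 1 → g = 1) (hg : g ∈ G) (hx : x ∈ D)
    (hgx : g x ∈ D) : g = 1 := by
  have hstab : g ∈ setStab G {x} := mem_setStab_singleton.2 ⟨hg, hD.apply_eq_self hg hx hgx⟩
  rwa [setStab_singleton_eq_bot htf (hD.1 hx), Subgroup.mem_bot] at hstab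

lemma IsFundamentalSet.exists_apply_mem_sdiff (hD : IsFundamentalSet G D) (hA : IsGInvariant G A)
    (hx : x ∈ discRegion G \ A) : ∃ g ∈ G, g x ∈ D \ A := by
  obtain ⟨_, ⟨hgx, g, hg, rfl⟩, -⟩ := hD.2 x hx.1
  exact ⟨g, hg, hgx, fun hgxA => hx.2 ((hA.apply_mem_iff hg).1 hgxA)⟩

lemma IsFundamentalSet.mem_of_apply_mem_sdiff (hD : IsFundamentalSet G D)
    (htf : ∀ g ∈ G, ∀ n : ℕ, 0 < n → g ^ n = 1 → g = 1) (hle : H ≤ G)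
    (hE : IsFundamentalSet H E) (hA : IsGInvariant H A) (hsub : E \ A ⊆ D) (hg : g ∈ G)
    (hx : x ∈ discRegion H \ A) (hgx : g x ∈ discRegion H \ A) : g ∈ H := by
  obtain ⟨a, ha, hax⟩ := hE.exists_apply_mem_sdiff hA hx
  obtain ⟨b, hb, hbgx⟩ := hE.exists_apply_mem_sdiff hA hgx
  have hmem : b * g * a⁻¹ ∈ G := G.mul_mem (G.mul_mem (hle hb) hg) (G.inv_mem (hle ha))
  have hmaps : (b * g * a⁻¹) (a x) = b (g x) := by simp
  have hone : b * g * a⁻¹ = 1 :=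
    hD.eq_one_of_apply_mem htf hmem (hsub hax) (hmaps ▸ hsub hbgx)
  have hg_eq : g = b⁻¹ * a := eq_inv_mul_of_mul_eq (mul_inv_eq_one.1 hone)
  exact hg_eq ▸ H.mul_mem (H.inv_mem hb) ha

theorem stabilizers_in_dividing_loop_construction_general
    (htf : ∀ g ∈ G, ∀ n : ℕ, 0 < n → g ^ n = 1 → g = 1) (hle : H ≤ G)
    (hD : IsFundamentalSet G D) (hE : IsFundamentalSet H E) (hA : IsGInvariant H A)
    (hsub : E \ A ⊆ D) (hΔ : Δ.Nonempty) (hΔA : Δ ⊆ discRegion H \ A) :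
    setStab G Δ = setStab H Δ ∧
      ∀ x ∈ Δ, ∀ y ∈ Δ, (∃ g ∈ G, g x = y) ↔ ∃ g ∈ H, g x = y := by
  have hmem : ∀ g ∈ G, ∀ x ∈ Δ, g x ∈ Δ → g ∈ H := fun _ hg _ hx hgx =>
    hD.mem_of_apply_mem_sdiff htf hle hE hA hsub hg (hΔA hx) (hΔA hgx)
  exact ⟨setStab_eq_setStab_of_le hle hΔ hmem,
    fun _ hx _ hy => exists_mem_apply_eq_iff_of_le hle hmem hx hy⟩

end DiscontinuityRegion

/-- (Maskit's dividing-loop construction, stabilizers.) In the setting of the dividing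
loop construction (`G` a non-degenerate B-group, `G₁, G₂ ≤ G`, fundamental sets with
`D - Δ₀ = (D₁ - Δ₀₁*) + (D₂ - Δ₀₂*)`), for every non-invariant component `Δ` of `Ω(G_i)`
different from `Δ₀ᵢ*` (for `i = 1` or `2`), the stabilizer of `Δ` in `G` coincides with
its stabilizer in `G_i`: `G_Δ = G_{i,Δ}`. In particular, two points `x₁, x₂ ∈ Δ` are
`G`-equivalent if and only if they are `G_i`-equivalent. -/
theorem stabilizers_in_dividing_loop_construction
    (G G₁ G₂ : Subgroup SphereHomeo) (Δ₀ Δ₁s Δ₂s : Set RSphere)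
    (hB : IsBGroup G Δ₀) (hnondeg : discRegion G ≠ Δ₀)
    (hle₁ : G₁ ≤ G) (hle₂ : G₂ ≤ G)
    (hcomp₁ : IsComponentOf G₁ Δ₁s) (hinv₁ : IsGInvariant G₁ Δ₁s)
    (hcomp₂ : IsComponentOf G₂ Δ₂s) (hinv₂ : IsGInvariant G₂ Δ₂s)
    (D D₁ D₂ : Set RSphere)
    (hD : IsFundamentalSet G D) (hD₁ : IsFundamentalSet G₁ D₁)
    (hD₂ : IsFundamentalSet G₂ D₂)
    (heq : D \ Δ₀ = (D₁ \ Δ₁s) ∪ (D₂ \ Δ₂s))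
    (hdisj : Disjoint (D₁ \ Δ₁s) (D₂ \ Δ₂s)) :
    (∀ Δ : Set RSphere, IsComponentOf G₁ Δ → Δ ≠ Δ₁s → ¬ IsGInvariant G₁ Δ →
      setStab G Δ = setStab G₁ Δ ∧
      (∀ x ∈ Δ, ∀ y ∈ Δ, ((∃ g ∈ G, g x = y) ↔ (∃ g ∈ G₁, g x = y)))) ∧
    (∀ Δ : Set RSphere, IsComponentOf G₂ Δ → Δ ≠ Δ₂s → ¬ IsGInvariant G₂ Δ →
      setStab G Δ = setStab G₂ Δ ∧
      (∀ x ∈ Δ, ∀ y ∈ Δ, ((∃ g ∈ G, g x = y) ↔ (∃ g ∈ G₂, g x = y)))) := by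
  obtain ⟨hsub₁, hsub₂⟩ := union_subset_iff.1 (heq ▸ sdiff_subset)
  have htf := hB.kleinian.torsionFree
  exact ⟨fun Δ hΔ hne _ => stabilizers_in_dividing_loop_construction_general htf hle₁ hD hD₁ hinv₁
      hsub₁ hΔ.nonempty (hΔ.subset_discRegion_sdiff hcomp₁ hne),
    fun Δ hΔ hne _ => stabilizers_in_dividing_loop_construction_general htf hle₂ hD hD₂ hinv₂
      hsub₂ hΔ.nonempty (hΔ.subset_discRegion_sdiff hcomp₂ hne)⟩
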